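/- Parabolic energy estimates for super-caloric functions: let I = [s₁,s₂] ⊂ ℝ, let B ⊂ V be a finite connected set, let η : V → ℝ satisfy η = 0 outside B, 0 ≤ η ≤ 1 and η ≡ 0 on ∂B, let K ≥ 1 satisfy η(y)² ≤ K·η(x)² for every {x,y} ∈ E with η(x) ≠ 0, and let ζ : ℝ → [0,1] be continuously differentiable with ζ = 0 outside I and ζ(s₂) = 0. Let u : I × V → (0,∞) be super-caloric on I × B. Then for every α ∈ (0,1/2): (a) ∫_I ζ(t)·E^ω_{η²}(u(t,·)^α)/|B| dt ≤ (8/(1−2α)²)·(K·‖∇η‖²_{ℓ∞(E)} + sup_{t∈I}|ζ′(t)|)·∫_I ‖u(t,·)^{2α}‖_{1,B,μ^ω} dt; and (b) max_{t∈I} ζ(t)·‖(η·u(t,·)^α)²‖_{1,B,μ^ω} ≤ (16/(1−2α))·(K·‖∇η‖²_{ℓ∞(E)} + sup_{t∈I}|ζ′(t)|)·∫_I ‖u(t,·)^{2α}‖_{1,B,μ^ω} dt. -/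

import Mathlib

open Finset MeasureTheory
open scoped ENNReal

noncomputable section

namespace RCM

variable {V : Type*}

/-- `μ^ω(x)`, the sum of the weights of edges incident to `x`. -/
def mu (nbr : V → Finset V) (ω : V → V → ℝ) (x : V) : ℝ := ∑ y ∈ nbr x, ω x y

/-- `ν^ω(x)`, the sum of the reciprocals of the weights of edges incident to `x`. -/
def nu (nbr : V → Finset V) (ω : V → V → ℝ) (x : V) : ℝ := ∑ y ∈ nbr x, (ω x y)⁻¹

/-- `(L_Y^ω f)(x)`. -/
def lap (nbr : V → Finset V) (ω : V → V → ℝ) (f : V → ℝ) (x : V) : ℝ :=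
  (mu nbr ω x)⁻¹ * ∑ y ∈ nbr x, ω x y * (f y - f x)

/-- space-averaged norm `‖f‖_{p,A}` for a real exponent `p`. -/
def nrm (A : Finset V) (p : ℝ) (f : V → ℝ) : ℝ :=
  ((A.card : ℝ)⁻¹ * ∑ x ∈ A, |f x| ^ p) ^ (1 / p)

/-- weighted space-averaged norm `‖f‖_{p,A,φ}` for a real exponent `p`. -/
def nrmW (A : Finset V) (p : ℝ) (φ : V → ℝ) (f : V → ℝ) : ℝ :=
  ((A.card : ℝ)⁻¹ * ∑ x ∈ A, |f x| ^ p * φ x) ^ (1 / p)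

/-- space-averaged norm `‖f‖_{p,A}` for an extended exponent `p ∈ (0,∞]`;
for `p = ∞` this is the maximum of `|f|` over `A`. -/
def nrmE (A : Finset V) (p : ℝ≥0∞) (f : V → ℝ) : ℝ :=
  if p = ⊤ then sSup ((fun x => |f x|) '' (A : Set V)) else nrm A p.toReal f

/-- weighted average `(u)_{A,π}`. -/
def wavg (A : Finset V) (π : V → ℝ) (u : V → ℝ) : ℝ :=
  (∑ x ∈ A, π x * u x) / ∑ x ∈ A, π x

open Classical in
/-- relative internal boundary `∂_B A`. -/
def relBdry (G : SimpleGraph V) (B A : Finset V) : Finset V :=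
  A.filter fun z => ∃ y ∈ B, y ∉ A ∧ G.Adj z y

open Classical in
/-- internal boundary `∂B`. -/
def intBdry (G : SimpleGraph V) (B : Finset V) : Finset V :=
  B.filter fun z => ∃ y, y ∉ B ∧ G.Adj z y

open Classical in
/-- Dirichlet sum `Σ_{x,y ∈ B, x∼y} ω(x,y) (u(x)-u(y))²`. -/
def dSum (G : SimpleGraph V) (ω : V → V → ℝ) (B : Finset V) (u : V → ℝ) : ℝ :=
  ∑ x ∈ B, ∑ y ∈ B, if G.Adj x y then ω x y * (u x - u y) ^ 2 else 0

/-- `E^ω_{η²}(u) = (1/2) Σ_{x,y} η(x)² ω(x,y) (u(y)-u(x))²`. -/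
def energySq (ω : V → V → ℝ) (η u : V → ℝ) : ℝ :=
  (1 / 2) * ∑' x, ∑' y, η x ^ 2 * ω x y * (u y - u x) ^ 2

/-- `E^{ω,η}(u) = (1/2) Σ_{x,y} min(η(x)²,η(y)²) ω(x,y) (u(y)-u(x))²`. -/
def energyMin (ω : V → V → ℝ) (η u : V → ℝ) : ℝ :=
  (1 / 2) * ∑' x, ∑' y, min (η x ^ 2) (η y ^ 2) * ω x y * (u y - u x) ^ 2

/-- `‖∇η‖_{ℓ∞(E)}`, the supremum of `|η(y)-η(x)|` over edges `{x,y}`. -/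
def gradSup (G : SimpleGraph V) (η : V → ℝ) : ℝ :=
  sSup {r : ℝ | ∃ x y, G.Adj x y ∧ r = |η y - η x|}

/-- `u` is caloric on `I × B`: `∂_t u = L_Y^ω u` on `I × B`. -/
def Caloric (nbr : V → Finset V) (ω : V → V → ℝ) (I : Set ℝ) (B : Set V)
    (u : ℝ → V → ℝ) : Prop :=
  ∀ x ∈ B, ∀ t ∈ I, HasDerivAt (fun s => u s x) (lap nbr ω (u t) x) t

/-- `u` is sub-caloric on `I × B`: `∂_t u ≤ L_Y^ω u` on `I × B`. -/
def SubCaloric (nbr : V → Finset V) (ω : V → V → ℝ) (I : Set ℝ) (B : Set V)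
    (u : ℝ → V → ℝ) : Prop :=
  ∀ x ∈ B, ∀ t ∈ I, ∃ d, HasDerivAt (fun s => u s x) d t ∧ d ≤ lap nbr ω (u t) x

/-- `u` is super-caloric on `I × B`: `∂_t u ≥ L_Y^ω u` on `I × B`. -/
def SuperCaloric (nbr : V → Finset V) (ω : V → V → ℝ) (I : Set ℝ) (B : Set V)
    (u : ℝ → V → ℝ) : Prop :=
  ∀ x ∈ B, ∀ t ∈ I, ∃ d, HasDerivAt (fun s => u s x) d t ∧ lap nbr ω (u t) x ≤ d

/-- space-time norm `‖u‖_{p,[a,b]×B,φ}`. -/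
def nrmST (a b : ℝ) (B : Finset V) (p : ℝ) (φ : V → ℝ) (u : ℝ → V → ℝ) : ℝ :=
  ((b - a)⁻¹ * ∫ t in a..b, nrmW B p φ (u t) ^ p) ^ (1 / p)

end RCM

/-- Lower bounds for `(r - 1) * (1 - w)`, where `r = s ^ 2 ≥ 1`, `w = r ^ (-δ)`, `P = r ^ α` and
`δ = 1 - 2 * α`. -/
theorem sub_mul_sub_lower_bounds {α δ r s w P : ℝ} (hα₀ : 0 < α) (hδ : 0 < δ)
    (hαδ : 2 * α = 1 - δ) (hs : 1 ≤ s) (hrs : r = s ^ 2) (hw0 : 0 < w) (hw1 : w ≤ 1)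
    (hw : δ * (r - 1) ≤ (1 - w) * r) (hP1 : 1 ≤ P) (hP : P - 1 ≤ 2 * α * (s - 1))
    (hPw : P ^ 2 = r * w) :
    δ * (P - 1) ^ 2 ≤ 2 * α * ((r - 1) * (1 - w)) ∧
      δ * ((r - 1) * w) ^ 2 ≤ (r - 1) * (1 - w) * P ^ 2 := by
  have hr : 1 ≤ r := by rw [hrs]; nlinarith only [hs]
  have hJ0 : 0 ≤ (r - 1) * (1 - w) := mul_nonneg (by linarith) (by linarith)
  have hJr : δ * (r - 1) ^ 2 ≤ (r - 1) * (1 - w) * r := by nlinarith only [hw, hr]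
  constructor
  · have hPs : (P - 1) ^ 2 ≤ 4 * α ^ 2 * (s - 1) ^ 2 := by
      have : (P - 1) ^ 2 ≤ (2 * α * (s - 1)) ^ 2 := by gcongr
      linarith
    have hJs : δ * (s - 1) ^ 2 ≤ (r - 1) * (1 - w) := by
      have h1 : (s - 1) ^ 2 * r ≤ (r - 1) ^ 2 := by
        have : (r - 1) ^ 2 = (s - 1) ^ 2 * (s + 1) ^ 2 := by rw [hrs]; ring
        rw [this, hrs]; gcongr; linarith
      have h2 : δ * (s - 1) ^ 2 * r ≤ (r - 1) * (1 - w) * r := by nlinarith only [h1, hJr, hδ]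
      exact le_of_mul_le_mul_right h2 (by linarith)
    calc δ * (P - 1) ^ 2 ≤ δ * (4 * α ^ 2 * (s - 1) ^ 2) := by gcongr
      _ = 4 * α ^ 2 * (δ * (s - 1) ^ 2) := by ring
      _ ≤ 4 * α ^ 2 * ((r - 1) * (1 - w)) := by gcongr
      _ ≤ 2 * α * ((r - 1) * (1 - w)) :=
        mul_le_mul_of_nonneg_right (by nlinarith only [hα₀, hδ, hαδ]) hJ0
  · calc δ * ((r - 1) * w) ^ 2 = δ * (r - 1) ^ 2 * w ^ 2 := by ring
      _ ≤ (r - 1) * (1 - w) * r * w ^ 2 := by gcongr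
      _ = (r - 1) * (1 - w) * P ^ 2 * w := by rw [hPw]; ring
      _ ≤ (r - 1) * (1 - w) * P ^ 2 := mul_le_of_le_one_right (by positivity) hw1

/-- Young's inequality for the cross term of the one-edge estimate. -/
theorem cross_term_le {δ K Q J P a b : ℝ} (hδ : 0 < δ) (hK : 1 ≤ K) (hJ0 : 0 ≤ J)
    (hQJ : δ * Q ^ 2 ≤ J * P ^ 2) (ha : 0 ≤ a) (hba : a ≤ b) (hbK : b ^ 2 ≤ K * a ^ 2) :
    2 * δ * ((b ^ 2 - a ^ 2) * Q) ≤ δ * (a ^ 2 * J) + 4 * (K * (b - a) ^ 2 * P ^ 2) := by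
  have h1 : (b + a) ^ 2 ≤ 4 * K * a ^ 2 := by nlinarith only [ha, hba, hbK]
  set X := (b ^ 2 - a ^ 2) * Q with hX
  set A := a ^ 2 * J with hA
  set D := K * (b - a) ^ 2 * P ^ 2 with hD
  have hA0 : 0 ≤ A := by positivity
  have hD0 : 0 ≤ D := by positivity
  have h3 : δ * X ^ 2 ≤ 4 * A * D := by
    calc δ * X ^ 2 = (b + a) ^ 2 * (b - a) ^ 2 * (δ * Q ^ 2) := by rw [hX]; ring
      _ ≤ 4 * K * a ^ 2 * (b - a) ^ 2 * (J * P ^ 2) := by gcongr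
      _ = 4 * A * D := by rw [hA, hD]; ring
  have h4 : (2 * δ * X) ^ 2 ≤ (δ * A + 4 * D) ^ 2 := by
    nlinarith only [sq_nonneg (δ * A - 4 * D), mul_le_mul_of_nonneg_left h3 hδ.le]
  exact (le_abs_self _).trans (abs_le_of_sq_le_sq h4 (by positivity))

/-- The one-edge estimate when the cut-off is larger at the endpoint with the larger value. -/
theorem edge_estimate_of_le {α δ K Q J P a b : ℝ} (hα₀ : 0 < α) (hδ : 0 < δ)
    (hαδ : 2 * α = 1 - δ) (hK : 1 ≤ K) (hQ0 : 0 ≤ Q) (hQP : Q ≤ P ^ 2) (hJ0 : 0 ≤ J)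
    (hP1 : 1 ≤ P) (hJP : δ * (P - 1) ^ 2 ≤ 2 * α * J) (hQJ : δ * Q ^ 2 ≤ J * P ^ 2)
    (ha : 0 ≤ a) (hba : a ≤ b) (hab : a = 0 ∨ b ^ 2 ≤ K * a ^ 2) :
    δ * (δ / 8 * (a ^ 2 + b ^ 2) * (P - 1) ^ 2) - 2 * (K * (b - a) ^ 2 * P ^ 2) ≤
      δ * (2 * α * (a ^ 2 * J + (a ^ 2 - b ^ 2) * Q)) := by
  have hPP : (P - 1) ^ 2 ≤ P ^ 2 := by nlinarith only [hP1]
  have hδ1 : δ ≤ 1 := by linarith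
  rcases hab with rfl | hbK
  · have h1 : δ * (2 * α) * (b ^ 2 * Q) ≤ 1 * (b ^ 2 * P ^ 2) := by
      gcongr
      nlinarith only [hδ, hα₀, hαδ]
    have h2 : δ * (δ / 8) * (b ^ 2 * (P - 1) ^ 2) ≤ 1 * (b ^ 2 * P ^ 2) := by
      gcongr
      nlinarith only [hδ, hδ1]
    have h3 : 1 * (b ^ 2 * P ^ 2) ≤ K * (b ^ 2 * P ^ 2) := by gcongr
    simp only [sub_zero]
    linarith
  · have h2 := cross_term_le hδ hK hJ0 hQJ ha hba hbK
    have h6 : a ^ 2 + b ^ 2 ≤ 3 * a ^ 2 + 2 * (b - a) ^ 2 := by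
      nlinarith only [sq_nonneg (b - 2 * a)]
    have h7 : 1 * (b - a) ^ 2 * (P - 1) ^ 2 ≤ K * (b - a) ^ 2 * P ^ 2 := by gcongr
    have h8 : δ * (δ / 8 * (a ^ 2 + b ^ 2) * (P - 1) ^ 2) ≤
        δ * (δ / 8 * (3 * a ^ 2 + 2 * (b - a) ^ 2) * (P - 1) ^ 2) := by gcongr
    have h9 : δ * (3 / 8 * a ^ 2 * (δ * (P - 1) ^ 2)) ≤
        δ * (3 / 8 * a ^ 2 * (2 * α * J)) := by gcongr
    have h10 : δ * (δ / 4 * (1 * (b - a) ^ 2 * (P - 1) ^ 2)) ≤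
        δ * (1 / 4 * (K * (b - a) ^ 2 * P ^ 2)) := by gcongr
    have h11 : 0 ≤ δ * α * (a ^ 2 * J) := by positivity
    have h12 : 0 ≤ δ * (K * (b - a) ^ 2 * P ^ 2) := by positivity
    have h13 : α * (2 * δ * ((b ^ 2 - a ^ 2) * Q)) ≤
        α * (δ * (a ^ 2 * J) + 4 * (K * (b - a) ^ 2 * P ^ 2)) := by gcongr
    have h14 : 4 * α * (K * (b - a) ^ 2 * P ^ 2) =
        2 * (1 - δ) * (K * (b - a) ^ 2 * P ^ 2) := by rw [← hαδ]; ring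
    linarith

/-- The one-edge estimate in normalized form: `r = s ^ 2` is the ratio of the values at the two
endpoints, `w = r ^ (-δ)`, `P = r ^ α`, and `δ = 1 - 2 * α`. -/
theorem edge_estimate_normalized {α δ K r s w P a b : ℝ} (hα₀ : 0 < α) (hδ : 0 < δ)
    (hαδ : 2 * α = 1 - δ) (hK : 1 ≤ K) (hs : 1 ≤ s) (hrs : r = s ^ 2) (hw0 : 0 < w) (hw1 : w ≤ 1)
    (hw : δ * (r - 1) ≤ (1 - w) * r) (hP1 : 1 ≤ P) (hP : P - 1 ≤ 2 * α * (s - 1))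
    (hPw : P ^ 2 = r * w) (ha : 0 ≤ a) (hb : 0 ≤ b) (hab : a = 0 ∨ b ^ 2 ≤ K * a ^ 2) :
    δ / 8 * (a ^ 2 + b ^ 2) * (P - 1) ^ 2 - 2 / δ * (K * (a - b) ^ 2) * (1 + P ^ 2) ≤
      2 * α * ((r - 1) * (a ^ 2 - b ^ 2 * w)) := by
  obtain ⟨hJP, hQJ⟩ := sub_mul_sub_lower_bounds hα₀ hδ hαδ hs hrs hw0 hw1 hw hP1 hP hPw
  have hr : 1 ≤ r := by rw [hrs]; nlinarith only [hs]
  have hJ0 : 0 ≤ (r - 1) * (1 - w) := mul_nonneg (by linarith) (by linarith)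
  have hQ0 : 0 ≤ (r - 1) * w := mul_nonneg (by linarith) hw0.le
  have hQP : (r - 1) * w ≤ P ^ 2 := by rw [hPw]; nlinarith only [hw0]
  have hsplit : (r - 1) * (a ^ 2 - b ^ 2 * w) =
      a ^ 2 * ((r - 1) * (1 - w)) + (a ^ 2 - b ^ 2) * ((r - 1) * w) := by ring
  rw [hsplit]
  generalize (r - 1) * (1 - w) = J at *
  generalize (r - 1) * w = Q at *
  rcases le_total b a with hba | hba
  · have h1 : 0 ≤ 2 * α * ((a ^ 2 - b ^ 2) * Q) :=
      mul_nonneg (by linarith) (mul_nonneg (by nlinarith only [hb, hba]) hQ0)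
    have hR : 0 ≤ 2 / δ * (K * (a - b) ^ 2) * (1 + P ^ 2) := by positivity
    have h2 : b ^ 2 * (δ * (P - 1) ^ 2) ≤ a ^ 2 * (δ * (P - 1) ^ 2) := by gcongr
    have h3 : a ^ 2 * (δ * (P - 1) ^ 2) ≤ a ^ 2 * (2 * α * J) := by gcongr
    have h4 : 0 ≤ a ^ 2 * (δ * (P - 1) ^ 2) := by positivity
    linarith
  · have hmain := edge_estimate_of_le hα₀ hδ hαδ hK hQ0 hQP hJ0 hP1 hJP hQJ ha hba hab
    have hfin : 2 / δ * (K * (a - b) ^ 2) * (1 + P ^ 2) =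
        (2 * (K * (b - a) ^ 2 * P ^ 2)) / δ + 2 / δ * (K * (b - a) ^ 2) := by
      field_simp; ring
    have hpos : 0 ≤ 2 / δ * (K * (b - a) ^ 2) := by positivity
    have hdiv : δ / 8 * (a ^ 2 + b ^ 2) * (P - 1) ^ 2 - (2 * (K * (b - a) ^ 2 * P ^ 2)) / δ ≤
        2 * α * (a ^ 2 * J + (a ^ 2 - b ^ 2) * Q) := by
      refine le_of_mul_le_mul_left ?_ hδ
      rw [mul_sub, mul_div_cancel₀ _ hδ.ne']
      exact hmain
    linarith

theorem edge_estimate_of_values_le {α K p q a b : ℝ} (hα₀ : 0 < α) (hα : α < 1 / 2) (hK : 1 ≤ K)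
    (hp : 0 < p) (hpq : p ≤ q) (ha : 0 ≤ a) (hb : 0 ≤ b) (hab : a = 0 ∨ b ^ 2 ≤ K * a ^ 2) :
    (1 - 2 * α) / 8 * (a ^ 2 + b ^ 2) * (q ^ α - p ^ α) ^ 2 -
        2 / (1 - 2 * α) * (K * (a - b) ^ 2) * (p ^ (2 * α) + q ^ (2 * α)) ≤
      2 * α * ((q - p) * (a ^ 2 * p ^ (2 * α - 1) - b ^ 2 * q ^ (2 * α - 1))) := by
  obtain ⟨r, hr, rfl⟩ : ∃ r, 1 ≤ r ∧ q = p * r :=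
    ⟨q / p, (one_le_div hp).2 hpq, by field_simp⟩
  have hr0 : 0 < r := by linarith
  have hw : r ^ (2 * α - 1) = r⁻¹ ^ (1 - 2 * α) := by
    rw [Real.inv_rpow hr0.le, ← Real.rpow_neg hr0.le]; congr 1; ring
  have hsqrt : 1 ≤ √r := Real.one_le_sqrt.2 hr
  have hr2 : r ^ (2 * α) = (r ^ α) ^ 2 := by
    rw [mul_comm, Real.rpow_mul hr0.le, Real.rpow_two]
  have key := edge_estimate_normalized (α := α) (δ := 1 - 2 * α) (r := r) (s := √r)
    (w := r ^ (2 * α - 1)) (P := r ^ α) hα₀ (by linarith) (by ring) hK hsqrt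
    (Real.sq_sqrt hr0.le).symm (Real.rpow_pos_of_pos hr0 _)
    (Real.rpow_le_one_of_one_le_of_nonpos hr (by linarith))
    (by
      have h := rpow_one_add_le_one_add_mul_self (s := r⁻¹ - 1) (p := 1 - 2 * α)
        (by have := inv_pos.2 hr0; linarith) (by linarith) (by linarith)
      rw [add_sub_cancel, ← hw] at h
      have h2 := mul_le_mul_of_nonneg_right h hr0.le
      have h3 : (1 + (1 - 2 * α) * (r⁻¹ - 1)) * r = r + (1 - 2 * α) * (1 - r) := by
        field_simp
      linarith)
    (Real.one_le_rpow hr hα₀.le)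
    (by
      have h := rpow_one_add_le_one_add_mul_self (s := √r - 1) (p := 2 * α)
        (by linarith) (by linarith) (by linarith)
      rw [add_sub_cancel, Real.sqrt_eq_rpow, ← Real.rpow_mul hr0.le] at h
      rw [Real.sqrt_eq_rpow]
      have h4 : (1 / 2 : ℝ) * (2 * α) = α := by ring
      rw [h4] at h
      linarith)
    (by rw [← hr2, Real.rpow_sub_one hr0.ne']; field_simp)
    ha hb hab
  have hp2 : p ^ (2 * α) = (p ^ α) ^ 2 := by
    rw [mul_comm, Real.rpow_mul hp.le, Real.rpow_two]
  have hp1 : p * p ^ (2 * α - 1) = (p ^ α) ^ 2 := by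
    rw [← hp2, Real.rpow_sub_one hp.ne']; field_simp
  have := mul_le_mul_of_nonneg_left key (sq_nonneg (p ^ α))
  rw [Real.mul_rpow hp.le hr0.le, Real.mul_rpow hp.le hr0.le, Real.mul_rpow hp.le hr0.le, hp2, hr2]
  calc _ = (p ^ α) ^ 2 * ((1 - 2 * α) / 8 * (a ^ 2 + b ^ 2) * (r ^ α - 1) ^ 2 -
        2 / (1 - 2 * α) * (K * (a - b) ^ 2) * (1 + (r ^ α) ^ 2)) := by ring
    _ ≤ _ := this
    _ = _ := by rw [← hp1]; ring

/-- The one-edge estimate, with `p`, `q` the values and `a`, `b` the cut-offs at the endpoints. -/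
theorem edge_estimate {α K p q a b : ℝ} (hα₀ : 0 < α) (hα : α < 1 / 2) (hK : 1 ≤ K)
    (hp : 0 < p) (hq : 0 < q) (ha : 0 ≤ a) (hb : 0 ≤ b) (hab : a ≠ 0 → b ^ 2 ≤ K * a ^ 2)
    (hba : b ≠ 0 → a ^ 2 ≤ K * b ^ 2) :
    (1 - 2 * α) / 8 * (a ^ 2 + b ^ 2) * (q ^ α - p ^ α) ^ 2 -
        2 / (1 - 2 * α) * (K * (a - b) ^ 2) * (p ^ (2 * α) + q ^ (2 * α)) ≤
      2 * α * ((q - p) * (a ^ 2 * p ^ (2 * α - 1) - b ^ 2 * q ^ (2 * α - 1))) := by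
  rcases le_total p q with h | h
  · exact edge_estimate_of_values_le hα₀ hα hK hp h ha hb (or_iff_not_imp_left.2 hab)
  · have := edge_estimate_of_values_le hα₀ hα hK hq h hb ha (or_iff_not_imp_left.2 hba)
    linarith

/-- Integrated differential inequality with a temporal cut-off vanishing at the final time. -/
theorem cutoff_integral_estimate {a b c C Z : ℝ} (hab : a ≤ b) {F F' E M ζ : ℝ → ℝ}
    (hζC1 : ContDiff ℝ 1 ζ) (hζ01 : ∀ t, 0 ≤ ζ t ∧ ζ t ≤ 1) (hζb : ζ b = 0)
    (hF : ∀ t ∈ Set.Icc a b, HasDerivAt F (F' t) t)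
    (hE : ContinuousOn E (Set.Icc a b)) (hM : ContinuousOn M (Set.Icc a b))
    (hC : 0 ≤ C)
    (hZ : ∀ t ∈ Set.Icc a b, |deriv ζ t| ≤ Z)
    (hF0 : ∀ t ∈ Set.Icc a b, 0 ≤ F t) (hFM : ∀ t ∈ Set.Icc a b, F t ≤ M t)
    (hF' : ∀ t ∈ Set.Icc a b, c * E t - C * M t ≤ F' t) :
    ζ a * F a + c * ∫ t in a..b, ζ t * E t ≤ (C + Z) * ∫ t in a..b, M t := by
  have hζE : ContinuousOn (fun t => ζ t * E t) (Set.Icc a b) := hζC1.continuous.continuousOn.mul hE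
  have hcont : ContinuousOn (fun t => c * (ζ t * E t) - (C + Z) * M t) (Set.Icc a b) :=
    (hζE.const_mul c).sub (hM.const_mul _)
  have hder : ∀ t ∈ Set.Icc a b,
      HasDerivAt (fun s => ζ s * F s) (deriv ζ t * F t + ζ t * F' t) t := fun t ht =>
    ((hζC1.differentiable one_ne_zero t).hasDerivAt).mul (hF t ht)
  have h := intervalIntegral.integral_le_sub_of_hasDeriv_right_of_le hab
    (fun t ht => (hder t ht).continuousAt.continuousWithinAt)
    (fun t ht => (hder t (Set.Ioo_subset_Icc_self ht)).hasDerivWithinAt)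
    (hcont.integrableOn_compact isCompact_Icc)
    (fun t ht => by
      have ht := Set.Ioo_subset_Icc_self ht
      have h1 : ζ t * (c * E t - C * M t) ≤ ζ t * F' t :=
        mul_le_mul_of_nonneg_left (hF' t ht) (hζ01 t).1
      have hM0 : 0 ≤ M t := (hF0 t ht).trans (hFM t ht)
      have h2 : ζ t * (C * M t) ≤ C * M t :=
        mul_le_of_le_one_left (mul_nonneg hC hM0) (hζ01 t).2
      have h3 : -(Z * M t) ≤ deriv ζ t * F t := by
        have : |deriv ζ t * F t| ≤ Z * M t := by
          rw [abs_mul, abs_of_nonneg (hF0 t ht)]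
          exact mul_le_mul (hZ t ht) (hFM t ht) (hF0 t ht) ((abs_nonneg _).trans (hZ t ht))
        exact (abs_le.1 this).1
      linarith)
  rw [intervalIntegral.integral_sub, intervalIntegral.integral_const_mul,
    intervalIntegral.integral_const_mul, hζb] at h
  · linarith
  · exact ((hζE.const_mul c).mono (Set.uIcc_of_le hab).le).intervalIntegrable
  · exact ((hM.const_mul _).mono (Set.uIcc_of_le hab).le).intervalIntegrable

namespace RCM

theorem nrmW_one {V : Type*} (A : Finset V) (φ f : V → ℝ) :
    nrmW A 1 φ f = (A.card : ℝ)⁻¹ * ∑ x ∈ A, |f x| * φ x := by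
  simp [nrmW]

theorem abs_sub_le_gradSup {V : Type*} {G : SimpleGraph V} {η : V → ℝ}
    (hη01 : ∀ x, 0 ≤ η x ∧ η x ≤ 1) {x y : V} (h : G.Adj x y) : |η y - η x| ≤ gradSup G η := by
  refine le_csSup ⟨1, ?_⟩ ⟨x, y, h, rfl⟩
  rintro _ ⟨x, y, -, rfl⟩
  rw [abs_le]
  constructor <;> linarith [hη01 x, hη01 y]

theorem mem_of_adj_of_ne_zero {V : Type*} {G : SimpleGraph V} {B : Finset V} {η : V → ℝ}
    (hηsupp : ∀ x ∉ B, η x = 0) (hηbdry : ∀ x ∈ intBdry G B, η x = 0) {x y : V}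
    (hx : η x ≠ 0) (h : G.Adj x y) : y ∈ B := by
  by_contra hy
  have hxB : x ∈ B := by_contra fun h => hx (hηsupp x h)
  exact hx (hηbdry x (by simpa [intBdry, hxB] using ⟨y, hy, h⟩))

theorem sum_nbr_eq_sum {V : Type*} {G : SimpleGraph V} {nbr : V → Finset V}
    (hnbr : ∀ x y, y ∈ nbr x ↔ G.Adj x y) {ω : V → V → ℝ}
    (hzero : ∀ x y, ¬ G.Adj x y → ω x y = 0) {B : Finset V} {x : V}
    (hx : ∀ y, G.Adj x y → y ∈ B) (f : V → ℝ) :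
    ∑ y ∈ nbr x, ω x y * f y = ∑ y ∈ B, ω x y * f y := by
  refine Finset.sum_subset (fun y hy => hx y ((hnbr x y).1 hy)) fun y _ hy => ?_
  rw [hzero x y fun h => hy ((hnbr x y).2 h), zero_mul]

theorem weight_nonneg {V : Type*} {G : SimpleGraph V} {ω : V → V → ℝ}
    (hpos : ∀ x y, G.Adj x y → 0 < ω x y) (hzero : ∀ x y, ¬ G.Adj x y → ω x y = 0) (x y : V) :
    0 ≤ ω x y := by
  by_cases h : G.Adj x y
  · exact (hpos x y h).le
  · exact (hzero x y h).ge

theorem sum_le_mu {V : Type*} {G : SimpleGraph V} {nbr : V → Finset V}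
    (hnbr : ∀ x y, y ∈ nbr x ↔ G.Adj x y) {ω : V → V → ℝ}
    (hpos : ∀ x y, G.Adj x y → 0 < ω x y)
    (hzero : ∀ x y, ¬ G.Adj x y → ω x y = 0) (B : Finset V) (x : V) :
    ∑ y ∈ B, ω x y ≤ mu nbr ω x := by
  classical
  rw [mu, ← Finset.sum_filter_add_sum_filter_not B (fun y => G.Adj x y),
    Finset.sum_eq_zero (s := B.filter fun y => ¬ G.Adj x y)
      (fun y hy => hzero x y (Finset.mem_filter.1 hy).2), add_zero]
  exact Finset.sum_le_sum_of_subset_of_nonneg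
    (fun y hy => (hnbr x y).2 (Finset.mem_filter.1 hy).2)
    fun y _ _ => weight_nonneg hpos hzero x y

theorem mu_mul_lap {V : Type*} {G : SimpleGraph V} {nbr : V → Finset V}
    (hnbr : ∀ x y, y ∈ nbr x ↔ G.Adj x y) {ω : V → V → ℝ}
    (hpos : ∀ x y, G.Adj x y → 0 < ω x y) (f : V → ℝ) (x : V) :
    mu nbr ω x * lap nbr ω f x = ∑ y ∈ nbr x, ω x y * (f y - f x) := by
  rcases (nbr x).eq_empty_or_nonempty with h | h
  · simp [mu, lap, h]
  · have : 0 < mu nbr ω x := Finset.sum_pos (fun y hy => hpos x y ((hnbr x y).1 hy)) h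
    rw [lap, mul_inv_cancel_left₀ this.ne']

theorem energySq_eq_sum {V : Type*} {G : SimpleGraph V} {ω : V → V → ℝ}
    (hzero : ∀ x y, ¬ G.Adj x y → ω x y = 0) {B : Finset V} {η : V → ℝ}
    (hηsupp : ∀ x ∉ B, η x = 0) (hηbdry : ∀ x ∈ intBdry G B, η x = 0) (f : V → ℝ) :
    energySq ω η f = 1 / 2 * ∑ x ∈ B, ∑ y ∈ B, η x ^ 2 * ω x y * (f y - f x) ^ 2 := by
  rw [energySq, tsum_eq_sum (s := B) fun x hx => by simp [hηsupp x hx]]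
  congr 1
  refine Finset.sum_congr rfl fun x _ => tsum_eq_sum fun y hy => ?_
  by_cases hx : η x = 0
  · simp [hx]
  · rw [hzero x y fun h => hy (mem_of_adj_of_ne_zero hηsupp hηbdry hx h)]
    simp

theorem sum_sum_symm {V : Type*} (B : Finset V) (f : V → V → ℝ) :
    ∑ x ∈ B, ∑ y ∈ B, (f x y + f y x) = 2 * ∑ x ∈ B, ∑ y ∈ B, f x y := by
  simp only [Finset.sum_add_distrib]
  rw [Finset.sum_comm (f := fun x y => f y x)]
  ring

/-- The spatial energy estimate: testing the Laplacian of `f` against `η ^ 2 * f ^ (2 * α - 1)`. -/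
theorem spatial_energy_estimate {V : Type*} {G : SimpleGraph V} {nbr : V → Finset V}
    (hnbr : ∀ x y, y ∈ nbr x ↔ G.Adj x y) {ω : V → V → ℝ} (hsymm : ∀ x y, ω x y = ω y x)
    (hpos : ∀ x y, G.Adj x y → 0 < ω x y) (hzero : ∀ x y, ¬ G.Adj x y → ω x y = 0)
    {B : Finset V} {η : V → ℝ} (hηsupp : ∀ x ∉ B, η x = 0) (hη01 : ∀ x, 0 ≤ η x ∧ η x ≤ 1)
    (hηbdry : ∀ x ∈ intBdry G B, η x = 0) {K : ℝ} (hK : 1 ≤ K)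
    (hosc : ∀ x y, G.Adj x y → η x ≠ 0 → η y ^ 2 ≤ K * η x ^ 2) {f : V → ℝ} (hf : ∀ x, 0 < f x)
    {α : ℝ} (hα₀ : 0 < α) (hα : α < 1 / 2) :
    (1 - 2 * α) / 4 * energySq ω η (fun x => f x ^ α) -
        2 / (1 - 2 * α) * (K * gradSup G η ^ 2) * ∑ x ∈ B, f x ^ (2 * α) * mu nbr ω x ≤
      2 * α * ∑ x ∈ B, η x ^ 2 * f x ^ (2 * α - 1) * (mu nbr ω x * lap nbr ω f x) := by
  have hδ : 0 < 1 - 2 * α := by linarith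
  set W := 2 / (1 - 2 * α) * (K * gradSup G η ^ 2) with hW
  have hW0 : 0 ≤ W := by positivity
  have hflux : ∑ x ∈ B, η x ^ 2 * f x ^ (2 * α - 1) * (mu nbr ω x * lap nbr ω f x) =
      ∑ x ∈ B, ∑ y ∈ B, ω x y * (η x ^ 2 * f x ^ (2 * α - 1) * (f y - f x)) := by
    refine Finset.sum_congr rfl fun x _ => ?_
    by_cases hx : η x = 0
    · simp [hx]
    · rw [mu_mul_lap hnbr hpos, sum_nbr_eq_sum hnbr hzero
        (fun y => mem_of_adj_of_ne_zero hηsupp hηbdry hx), Finset.mul_sum]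
      exact Finset.sum_congr rfl fun y _ => by ring
  have hmass : ∑ x ∈ B, ∑ y ∈ B, ω x y * f x ^ (2 * α) ≤
      ∑ x ∈ B, f x ^ (2 * α) * mu nbr ω x := by
    refine Finset.sum_le_sum fun x _ => ?_
    rw [← Finset.sum_mul, mul_comm]
    exact mul_le_mul_of_nonneg_left (sum_le_mu hnbr hpos hzero B x)
      (Real.rpow_nonneg (hf x).le _)
  have hedge : ∀ x y, ω x y * ((1 - 2 * α) / 8 * (η x ^ 2 + η y ^ 2) * (f y ^ α - f x ^ α) ^ 2
      - W * (f x ^ (2 * α) + f y ^ (2 * α))) ≤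
      ω x y * (2 * α * ((f y - f x) *
        (η x ^ 2 * f x ^ (2 * α - 1) - η y ^ 2 * f y ^ (2 * α - 1)))) := by
    intro x y
    by_cases h : G.Adj x y
    · refine mul_le_mul_of_nonneg_left ?_ (hpos x y h).le
      refine le_trans ?_ (edge_estimate hα₀ hα hK (hf x) (hf y) (hη01 x).1 (hη01 y).1
        (hosc x y h) (hosc y x h.symm))
      have hg : (η x - η y) ^ 2 ≤ gradSup G η ^ 2 :=
        sq_le_sq' (by linarith [(abs_le.1 (abs_sub_le_gradSup hη01 h)).2])
          (by linarith [(abs_le.1 (abs_sub_le_gradSup hη01 h)).1])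
      have hx := Real.rpow_nonneg (hf x).le (2 * α)
      have hy := Real.rpow_nonneg (hf y).le (2 * α)
      have : 2 / (1 - 2 * α) * (K * (η x - η y) ^ 2) ≤ W := by rw [hW]; gcongr
      gcongr
    · simp [hzero x y h]
  have hsum := Finset.sum_le_sum fun x (_ : x ∈ B) => Finset.sum_le_sum fun y (_ : y ∈ B) =>
    hedge x y
  have hl : ∑ x ∈ B, ∑ y ∈ B, ω x y * ((1 - 2 * α) / 8 * (η x ^ 2 + η y ^ 2) *
      (f y ^ α - f x ^ α) ^ 2 - W * (f x ^ (2 * α) + f y ^ (2 * α))) =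
      2 * ((1 - 2 * α) / 8 * ∑ x ∈ B, ∑ y ∈ B, η x ^ 2 * ω x y * (f y ^ α - f x ^ α) ^ 2 -
        W * ∑ x ∈ B, ∑ y ∈ B, ω x y * f x ^ (2 * α)) := by
    simp only [Finset.mul_sum, ← Finset.sum_sub_distrib]
    simp only [← Finset.mul_sum]
    rw [← sum_sum_symm]
    refine Finset.sum_congr rfl fun x _ => Finset.sum_congr rfl fun y _ => ?_
    rw [hsymm y x]
    ring
  have hr : ∑ x ∈ B, ∑ y ∈ B, ω x y * (2 * α * ((f y - f x) *
      (η x ^ 2 * f x ^ (2 * α - 1) - η y ^ 2 * f y ^ (2 * α - 1)))) =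
      2 * (2 * α * ∑ x ∈ B, ∑ y ∈ B, ω x y * (η x ^ 2 * f x ^ (2 * α - 1) * (f y - f x))) := by
    simp only [Finset.mul_sum (a := 2 * α)]
    rw [← sum_sum_symm]
    refine Finset.sum_congr rfl fun x _ => Finset.sum_congr rfl fun y _ => ?_
    rw [hsymm y x]
    ring
  rw [hl, hr] at hsum
  rw [hflux, energySq_eq_sum hzero hηsupp hηbdry]
  have := mul_le_mul_of_nonneg_left hmass hW0
  linarith

end RCM

open RCM in
/-- **Parabolic energy estimates for super-caloric functions** (Lemma 4.5). -/
theorem parabolic_energy_estimates_supercaloric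
    {V : Type*} (G : SimpleGraph V) (nbr : V → Finset V)
    (hnbr : ∀ x y, y ∈ nbr x ↔ G.Adj x y)
    (ω : V → V → ℝ)
    (hsymm : ∀ x y, ω x y = ω y x)
    (hpos : ∀ x y, G.Adj x y → 0 < ω x y)
    (hzero : ∀ x y, ¬ G.Adj x y → ω x y = 0)
    (s₁ s₂ : ℝ) (hs : s₁ ≤ s₂)
    (B : Finset V) (hBconn : (G.induce (B : Set V)).Connected)
    (η : V → ℝ)
    (hηsupp : ∀ x ∉ B, η x = 0)
    (hη01 : ∀ x, 0 ≤ η x ∧ η x ≤ 1)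
    (hηbdry : ∀ x ∈ intBdry G B, η x = 0)
    (K : ℝ) (hK : 1 ≤ K)
    (hosc : ∀ x y, G.Adj x y → η x ≠ 0 → η y ^ 2 ≤ K * η x ^ 2)
    (ζ : ℝ → ℝ) (hζC1 : ContDiff ℝ 1 ζ)
    (hζ01 : ∀ t, 0 ≤ ζ t ∧ ζ t ≤ 1)
    (hζsupp : ∀ t ∉ Set.Icc s₁ s₂, ζ t = 0) (hζs₂ : ζ s₂ = 0)
    (u : ℝ → V → ℝ) (hu : ∀ t ∈ Set.Icc s₁ s₂, ∀ x, 0 < u t x)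
    (hsuper : SuperCaloric nbr ω (Set.Icc s₁ s₂) (B : Set V) u)
    (α : ℝ) (hα₀ : 0 < α) (hα : α < 1 / 2) :
    ((∫ t in s₁..s₂, ζ t * (energySq ω η (fun x => u t x ^ α) / (B.card : ℝ))) ≤
      8 / (1 - 2 * α) ^ 2 *
        (K * gradSup G η ^ 2 + sSup ((fun t => |deriv ζ t|) '' Set.Icc s₁ s₂)) *
        ∫ t in s₁..s₂, nrmW B 1 (mu nbr ω) (fun x => u t x ^ (2 * α))) ∧
    (sSup ((fun t => ζ t * nrmW B 1 (mu nbr ω) (fun x => (η x * u t x ^ α) ^ 2)) ''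
        Set.Icc s₁ s₂) ≤
      16 / (1 - 2 * α) *
        (K * gradSup G η ^ 2 + sSup ((fun t => |deriv ζ t|) '' Set.Icc s₁ s₂)) *
        ∫ t in s₁..s₂, nrmW B 1 (mu nbr ω) (fun x => u t x ^ (2 * α))) := by
  have hδ : 0 < 1 - 2 * α := by linarith
  have hδ1 : 1 - 2 * α ≤ 1 := by linarith
  have hcard : (0 : ℝ) ≤ (B.card : ℝ)⁻¹ := by positivity
  have hmu : ∀ x, 0 ≤ mu nbr ω x := fun x =>
    Finset.sum_nonneg fun y _ => weight_nonneg hpos hzero x y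
  choose! d hd hdlap using hsuper
  have hucont : ∀ x ∈ B, ContinuousOn (fun t => u t x) (Set.Icc s₁ s₂) := fun x hx t ht =>
    (hd x hx t ht).continuousAt.continuousWithinAt
  have hpow : ∀ (p : ℝ), ∀ x ∈ B, ContinuousOn (fun t => u t x ^ p) (Set.Icc s₁ s₂) :=
    fun p x hx => (hucont x hx).rpow_const fun t ht => Or.inl (hu t ht x).ne'
  set F : ℝ → ℝ := fun t => (B.card : ℝ)⁻¹ * ∑ x ∈ B, η x ^ 2 * u t x ^ (2 * α) * mu nbr ω x
  set F' : ℝ → ℝ := fun t => (B.card : ℝ)⁻¹ *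
    ∑ x ∈ B, η x ^ 2 * (d x t * (2 * α) * u t x ^ (2 * α - 1)) * mu nbr ω x
  set E : ℝ → ℝ := fun t => energySq ω η (fun x => u t x ^ α) / (B.card : ℝ) with hEdef
  set M : ℝ → ℝ := fun t => nrmW B 1 (mu nbr ω) (fun x => u t x ^ (2 * α)) with hMdef
  set Z := sSup ((fun t => |deriv ζ t|) '' Set.Icc s₁ s₂)
  set W := K * gradSup G η ^ 2
  have hW0 : 0 ≤ W := by positivity
  have hM : ∀ t ∈ Set.Icc s₁ s₂,
      M t = (B.card : ℝ)⁻¹ * ∑ x ∈ B, u t x ^ (2 * α) * mu nbr ω x := fun t ht => by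
    simp only [hMdef, nrmW_one]
    simp only [abs_of_nonneg (Real.rpow_nonneg (hu t ht _).le _)]
  have hFder : ∀ t ∈ Set.Icc s₁ s₂, HasDerivAt F (F' t) t := fun t ht =>
    (HasDerivAt.fun_sum fun x hx => (((hd x hx t ht).rpow_const
      (Or.inl (hu t ht x).ne')).const_mul _).mul_const _).const_mul _
  have hFnrm : ∀ t ∈ Set.Icc s₁ s₂,
      nrmW B 1 (mu nbr ω) (fun x => (η x * u t x ^ α) ^ 2) = F t := fun t ht => by
    rw [nrmW_one]
    refine congrArg _ (Finset.sum_congr rfl fun x _ => ?_)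
    rw [abs_of_nonneg (sq_nonneg _), mul_pow, mul_comm 2 α, Real.rpow_mul (hu t ht x).le,
      Real.rpow_two]
  have hEcont : ContinuousOn E (Set.Icc s₁ s₂) := by
    simp only [hEdef, energySq_eq_sum hzero hηsupp hηbdry]
    exact (continuousOn_const.mul (continuousOn_finsetSum _ fun x hx =>
      continuousOn_finsetSum _ fun y hy => continuousOn_const.mul
        (((hpow α y hy).sub (hpow α x hx)).pow 2))).div_const _
  have hMcont : ContinuousOn M (Set.Icc s₁ s₂) :=
    (continuousOn_const.mul (continuousOn_finsetSum _ fun x hx =>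
      (hpow (2 * α) x hx).mul continuousOn_const)).congr hM
  have hF0 : ∀ t ∈ Set.Icc s₁ s₂, 0 ≤ F t := fun t ht =>
    mul_nonneg hcard (Finset.sum_nonneg fun x _ => mul_nonneg
      (mul_nonneg (sq_nonneg _) (Real.rpow_nonneg (hu t ht x).le _)) (hmu x))
  have hFM : ∀ t ∈ Set.Icc s₁ s₂, F t ≤ M t := fun t ht => by
    rw [hM t ht]
    refine mul_le_mul_of_nonneg_left (Finset.sum_le_sum fun x _ => ?_) hcard
    refine mul_le_mul_of_nonneg_right (mul_le_of_le_one_left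
      (Real.rpow_nonneg (hu t ht x).le _) (pow_le_one₀ (hη01 x).1 (hη01 x).2)) (hmu x)
  have hM0 : ∀ t ∈ Set.Icc s₁ s₂, 0 ≤ M t := fun t ht => (hF0 t ht).trans (hFM t ht)
  have hF' : ∀ t ∈ Set.Icc s₁ s₂,
      (1 - 2 * α) / 4 * E t - 2 / (1 - 2 * α) * W * M t ≤ F' t := fun t ht => by
    have h := mul_le_mul_of_nonneg_left (spatial_energy_estimate hnbr hsymm hpos hzero hηsupp hη01
      hηbdry hK hosc (hu t ht) hα₀ hα) hcard
    rw [hM t ht]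
    calc _ = _ := by simp only [hEdef, div_eq_mul_inv]; ring
      _ ≤ _ := h
      _ ≤ F' t := by
        refine mul_le_mul_of_nonneg_left ?_ hcard
        rw [Finset.mul_sum]
        refine Finset.sum_le_sum fun x hx => ?_
        have h1 : 0 ≤ 2 * α * (η x ^ 2 * u t x ^ (2 * α - 1) * mu nbr ω x) :=
          mul_nonneg (by linarith) (mul_nonneg
            (mul_nonneg (sq_nonneg _) (Real.rpow_nonneg (hu t ht x).le _)) (hmu x))
        have h2 := mul_le_mul_of_nonneg_left (hdlap x hx t ht) h1
        linarith
  have hZ : ∀ t ∈ Set.Icc s₁ s₂, |deriv ζ t| ≤ Z := fun t ht =>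
    le_csSup (isCompact_Icc.image (hζC1.continuous_deriv_one.abs)).bddAbove ⟨t, ht, rfl⟩
  have hZ0 : 0 ≤ Z := (abs_nonneg _).trans (hZ s₁ ⟨le_rfl, hs⟩)
  have hI0 : 0 ≤ ∫ t in s₁..s₂, M t := intervalIntegral.integral_nonneg hs hM0
  have hC : 0 ≤ 2 / (1 - 2 * α) * W := by positivity
  have henergy : ∀ s ∈ Set.Icc s₁ s₂, ζ s * F s + (1 - 2 * α) / 4 * ∫ t in s..s₂, ζ t * E t ≤
      (2 / (1 - 2 * α) * W + Z) * ∫ t in s..s₂, M t := fun s hsI => by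
    have hsub : Set.Icc s s₂ ⊆ Set.Icc s₁ s₂ := Set.Icc_subset_Icc_left hsI.1
    exact cutoff_integral_estimate hsI.2 hζC1 hζ01 hζs₂ (fun t ht => hFder t (hsub ht))
      (hEcont.mono hsub) (hMcont.mono hsub) hC (fun t ht => hZ t (hsub ht))
      (fun t ht => hF0 t (hsub ht)) (fun t ht => hFM t (hsub ht)) fun t ht => hF' t (hsub ht)
  have hconst : 2 / (1 - 2 * α) * W + Z ≤ 2 / (1 - 2 * α) * (W + Z) := by
    have : 1 ≤ 2 / (1 - 2 * α) := by rw [le_div_iff₀ hδ]; linarith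
    nlinarith only [this, hZ0]
  have hE0 : ∀ t, 0 ≤ E t := fun t => by
    refine div_nonneg (mul_nonneg (by norm_num) (tsum_nonneg fun x => tsum_nonneg fun y => ?_))
      (Nat.cast_nonneg _)
    exact mul_nonneg (mul_nonneg (sq_nonneg _) (weight_nonneg hpos hzero x y)) (sq_nonneg _)
  constructor
  · have h := henergy s₁ ⟨le_rfl, hs⟩
    have h0 : 0 ≤ ζ s₁ * F s₁ := mul_nonneg (hζ01 _).1 (hF0 s₁ ⟨le_rfl, hs⟩)
    have h1 : (1 - 2 * α) / 4 * ∫ t in s₁..s₂, ζ t * E t ≤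
        2 / (1 - 2 * α) * (W + Z) * ∫ t in s₁..s₂, M t := by
      have := mul_le_mul_of_nonneg_right hconst hI0
      linarith
    have h2 := mul_le_mul_of_nonneg_left h1 (show 0 ≤ 4 / (1 - 2 * α) by positivity)
    calc ∫ t in s₁..s₂, ζ t * E t = 4 / (1 - 2 * α) * ((1 - 2 * α) / 4 * ∫ t in s₁..s₂, ζ t * E t) := by field_simp
      _ ≤ _ := h2
      _ = _ := by field_simp; ring
  · refine csSup_le ((Set.nonempty_Icc.2 hs).image _) ?_
    rintro _ ⟨s, hsI, rfl⟩
    have h := henergy s hsI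
    have h0 : 0 ≤ (1 - 2 * α) / 4 * ∫ t in s..s₂, ζ t * E t :=
      mul_nonneg (by linarith) (intervalIntegral.integral_nonneg hsI.2 fun t _ =>
        mul_nonneg (hζ01 t).1 (hE0 t))
    have hmono : ∫ t in s..s₂, M t ≤ ∫ t in s₁..s₂, M t :=
      intervalIntegral.integral_mono_interval hsI.1 hsI.2 le_rfl
        ((ae_restrict_mem measurableSet_Ioc).mono fun t ht => hM0 t (Set.Ioc_subset_Icc_self ht))
        (hMcont.mono (Set.uIcc_of_le hs).le).intervalIntegrable
    change ζ s * nrmW B 1 (mu nbr ω) (fun x => (η x * u s x ^ α) ^ 2) ≤ _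
    rw [hFnrm s hsI]
    calc ζ s * F s ≤ (2 / (1 - 2 * α) * W + Z) * ∫ t in s..s₂, M t := by linarith
      _ ≤ 2 / (1 - 2 * α) * (W + Z) * ∫ t in s₁..s₂, M t :=
        mul_le_mul hconst hmono (intervalIntegral.integral_nonneg hsI.2 fun t ht =>
          hM0 t ⟨hsI.1.trans ht.1, ht.2⟩) (by positivity)
      _ ≤ 16 / (1 - 2 * α) * (W + Z) * ∫ t in s₁..s₂, M t := by
        gcongr
        norm_num
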